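/- For every positive integer c with c ≡ 3 (mod 4), there exists an integer Heffter array set IHS(7, 7; c). -/

import Mathlib

/-- An integer Heffter array set `IHS(m, n; c)`: a family of `c` totally filled
`m × n` integer arrays such that the absolute values of all `c·m·n` entries are
pairwise distinct and their set is exactly `{1, …, m·n·c}`, and every row and
column of each array sums to `0`. -/
def IsIHS (m n c : ℕ) (A : Fin c → Matrix (Fin m) (Fin n) ℤ) : Prop :=
  Function.Injective (fun p : Fin c × Fin m × Fin n => |A p.1 p.2.1 p.2.2|) ∧
  (∀ x : ℤ, (1 ≤ x ∧ x ≤ (m : ℤ) * n * c) ↔ ∃ l i j, |A l i j| = x) ∧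
  (∀ l i, ∑ j, A l i j = 0) ∧
  (∀ l j, ∑ i, A l i j = 0)

/-- `b`-th block of `c = 4 n - 1` consecutive integers, run through with slope `s = ±1`. -/
def single (n s l b : ℤ) : ℤ := b * (4 * n - 1) + 2 * n + s * (l - (2 * n - 1))

/-- one parity class of the double block starting at `b c + 1`, run through with slope `2 s`. -/
def double (n s l b d : ℤ) : ℤ := (b + 1) * (4 * n - 1) + d + 2 * s * (l - (2 * n - 1))

/-- leftover parity class, cut into quadruples. -/
def quad (n l a : ℤ) : ℤ := 32 * (4 * n - 1) + 1 + 8 * l + a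

/-- runs of twelve consecutive integers. -/
def runA (n l a : ℤ) : ℤ := 34 * (4 * n - 1) + 1 + 12 * l + a

/-- runs of sixteen consecutive integers. -/
def runB (n l a : ℤ) : ℤ := 34 * (4 * n - 1) + 1 + 12 * n + 16 * (l - n) + a

/-- The `l`-th array. -/
def arr (n l : ℤ) : Matrix (Fin 7) (Fin 7) ℤ :=
  !![-double n (-1) l 18 1,
      -single n (1) l 11,
      single n (-1) l 28,
      double n (1) l 32 1,
      -double n (1) l 18 0,
      single n (-1) l 4,
      -single n (-1) l 16;
    single n (-1) l 25,
      double n (1) l 13 1,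
      -single n (1) l 23,
      -single n (1) l 20,
      -single n (-1) l 10,
      -double n (-1) l 6 1,
      double n (-1) l 21 1;
    single n (-1) l 8,
      -single n (1) l 0,
      -double n (-1) l 21 0,
      -single n (1) l 12,
      single n (1) l 29,
      single n (-1) l 2,
      -single n (-1) l 5;
    -double n (-1) l 6 0,
      -single n (1) l 24,
      single n (-1) l 31,
      if l < n then quad n l 0 else runB n l 1,
      if l < n then -quad n l 2 else -runB n l 2,
      if l < n then -runA n l 1 else -runB n l 5,
      if l < n then runA n l 3 else runB n l 6;
    -double n (1) l 26 1,
      single n (1) l 9,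
      single n (1) l 17,
      if l < n then -quad n l 4 else -runB n l 3,
      if l < n then quad n l 6 else runB n l 4,
      if l < n then runA n l 2 else runB n l 7,
      if l < n then -runA n l 4 else -runB n l 8;
    single n (-1) l 3,
      double n (1) l 26 0,
      -single n (1) l 30,
      if l < n then -runA n l 5 else -runB n l 9,
      if l < n then -runA n l 12 else runB n l 10,
      if l < n then runA n l 6 else runB n l 13,
      if l < n then runA n l 11 else -runB n l 14;
    single n (1) l 15,
      -double n (1) l 13 0,
      -single n (-1) l 1,
      if l < n then runA n l 9 else runB n l 11,
      if l < n then runA n l 8 else -runB n l 12,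
      if l < n then -runA n l 7 else -runB n l 15,
      if l < n then -runA n l 10 else runB n l 16]

theorem arr_row (n l : ℤ) (i : Fin 7) : ∑ j, arr n l i j = 0 := by
  by_cases h : l < n <;> fin_cases i <;>
    simp [arr, Fin.sum_univ_seven, h, single, double, quad, runA, runB] <;> ring

theorem arr_col (n l : ℤ) (j : Fin 7) : ∑ i, arr n l i j = 0 := by
  by_cases h : l < n <;> fin_cases j <;>
    simp [arr, Fin.sum_univ_seven, h, single, double, quad, runA, runB] <;> ring

/-- `x` occurs up to sign in one of the arrays. -/
def Hit (n x : ℤ) : Prop :=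
  ∃ l : ℤ, 0 ≤ l ∧ l < 4 * n - 1 ∧ ∃ i j, arr n l i j = x ∨ arr n l i j = -x

theorem hit_single (n x b s : ℤ) (hs : s = 1 ∨ s = -1) (i j : Fin 7)
    (h : ∀ l, arr n l i j = single n s l b ∨ arr n l i j = -single n s l b)
    (h1 : b * (4 * n - 1) < x) (h2 : x ≤ (b + 1) * (4 * n - 1)) : Hit n x := by
  have key : single n s (2 * n - 1 + s * (x - b * (4 * n - 1) - 2 * n)) b = x := by
    rcases hs with rfl | rfl <;> simp only [single] <;> ring
  refine ⟨2 * n - 1 + s * (x - b * (4 * n - 1) - 2 * n), ?_, ?_, i, j, ?_⟩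
  · rcases hs with rfl | rfl <;> linarith
  · rcases hs with rfl | rfl <;> linarith
  · have := h (2 * n - 1 + s * (x - b * (4 * n - 1) - 2 * n))
    rwa [key] at this

theorem hit_double (n x b s d t : ℤ) (hs : s = 1 ∨ s = -1) (i j : Fin 7)
    (h : ∀ l, arr n l i j = double n s l b d ∨ arr n l i j = -double n s l b d)
    (hx : x = b * (4 * n - 1) + 1 + d + 2 * t) (h1 : 0 ≤ t) (h2 : t < 4 * n - 1) : Hit n x := by
  have key : double n s (2 * n - 1 + s * (t - (2 * n - 1))) b d = x := by
    rw [hx]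
    rcases hs with rfl | rfl <;> simp only [double] <;> ring
  refine ⟨2 * n - 1 + s * (t - (2 * n - 1)), ?_, ?_, i, j, ?_⟩
  · rcases hs with rfl | rfl <;> linarith
  · rcases hs with rfl | rfl <;> linarith
  · have := h (2 * n - 1 + s * (t - (2 * n - 1)))
    rwa [key] at this

theorem hit_low (n x : ℤ) (h0 : 0 < x) (hx : x ≤ 32 * (4 * n - 1)) : Hit n x := by
  by_cases h0 : x ≤ 1 * (4 * n - 1)
  · exact hit_single n x 0 (1) (by norm_num) 2 1 (fun l => by simp [arr]) (by linarith) (by linarith)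
  by_cases h1 : x ≤ 2 * (4 * n - 1)
  · exact hit_single n x 1 (-1) (by norm_num) 6 2 (fun l => by simp [arr]) (by linarith) (by linarith)
  by_cases h2 : x ≤ 3 * (4 * n - 1)
  · exact hit_single n x 2 (-1) (by norm_num) 2 5 (fun l => by simp [arr]) (by linarith) (by linarith)
  by_cases h3 : x ≤ 4 * (4 * n - 1)
  · exact hit_single n x 3 (-1) (by norm_num) 5 0 (fun l => by simp [arr]) (by linarith) (by linarith)
  by_cases h4 : x ≤ 5 * (4 * n - 1)
  · exact hit_single n x 4 (-1) (by norm_num) 0 5 (fun l => by simp [arr]) (by linarith) (by linarith)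
  by_cases h5 : x ≤ 6 * (4 * n - 1)
  · exact hit_single n x 5 (-1) (by norm_num) 2 6 (fun l => by simp [arr]) (by linarith) (by linarith)
  by_cases h6 : x ≤ 8 * (4 * n - 1)
  · obtain ⟨t, ht | ht⟩ : ∃ t, x = 6 * (4 * n - 1) + 1 + 0 + 2 * t ∨ x = 6 * (4 * n - 1) + 1 + 1 + 2 * t :=
      ⟨(x - 6 * (4 * n - 1) - 1) / 2, by omega⟩
    · exact hit_double n x 6 (-1) 0 t (by norm_num) 3 0 (fun l => by simp [arr]) ht (by omega) (by omega)
    · exact hit_double n x 6 (-1) 1 t (by norm_num) 1 5 (fun l => by simp [arr]) ht (by omega) (by omega)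
  by_cases h8 : x ≤ 9 * (4 * n - 1)
  · exact hit_single n x 8 (-1) (by norm_num) 2 0 (fun l => by simp [arr]) (by linarith) (by linarith)
  by_cases h9 : x ≤ 10 * (4 * n - 1)
  · exact hit_single n x 9 (1) (by norm_num) 4 1 (fun l => by simp [arr]) (by linarith) (by linarith)
  by_cases h10 : x ≤ 11 * (4 * n - 1)
  · exact hit_single n x 10 (-1) (by norm_num) 1 4 (fun l => by simp [arr]) (by linarith) (by linarith)
  by_cases h11 : x ≤ 12 * (4 * n - 1)
  · exact hit_single n x 11 (1) (by norm_num) 0 1 (fun l => by simp [arr]) (by linarith) (by linarith)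
  by_cases h12 : x ≤ 13 * (4 * n - 1)
  · exact hit_single n x 12 (1) (by norm_num) 2 3 (fun l => by simp [arr]) (by linarith) (by linarith)
  by_cases h13 : x ≤ 15 * (4 * n - 1)
  · obtain ⟨t, ht | ht⟩ : ∃ t, x = 13 * (4 * n - 1) + 1 + 0 + 2 * t ∨ x = 13 * (4 * n - 1) + 1 + 1 + 2 * t :=
      ⟨(x - 13 * (4 * n - 1) - 1) / 2, by omega⟩
    · exact hit_double n x 13 (1) 0 t (by norm_num) 6 1 (fun l => by simp [arr]) ht (by omega) (by omega)
    · exact hit_double n x 13 (1) 1 t (by norm_num) 1 1 (fun l => by simp [arr]) ht (by omega) (by omega)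
  by_cases h15 : x ≤ 16 * (4 * n - 1)
  · exact hit_single n x 15 (1) (by norm_num) 6 0 (fun l => by simp [arr]) (by linarith) (by linarith)
  by_cases h16 : x ≤ 17 * (4 * n - 1)
  · exact hit_single n x 16 (-1) (by norm_num) 0 6 (fun l => by simp [arr]) (by linarith) (by linarith)
  by_cases h17 : x ≤ 18 * (4 * n - 1)
  · exact hit_single n x 17 (1) (by norm_num) 4 2 (fun l => by simp [arr]) (by linarith) (by linarith)
  by_cases h18 : x ≤ 20 * (4 * n - 1)
  · obtain ⟨t, ht | ht⟩ : ∃ t, x = 18 * (4 * n - 1) + 1 + 0 + 2 * t ∨ x = 18 * (4 * n - 1) + 1 + 1 + 2 * t :=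
      ⟨(x - 18 * (4 * n - 1) - 1) / 2, by omega⟩
    · exact hit_double n x 18 (1) 0 t (by norm_num) 0 4 (fun l => by simp [arr]) ht (by omega) (by omega)
    · exact hit_double n x 18 (-1) 1 t (by norm_num) 0 0 (fun l => by simp [arr]) ht (by omega) (by omega)
  by_cases h20 : x ≤ 21 * (4 * n - 1)
  · exact hit_single n x 20 (1) (by norm_num) 1 3 (fun l => by simp [arr]) (by linarith) (by linarith)
  by_cases h21 : x ≤ 23 * (4 * n - 1)
  · obtain ⟨t, ht | ht⟩ : ∃ t, x = 21 * (4 * n - 1) + 1 + 0 + 2 * t ∨ x = 21 * (4 * n - 1) + 1 + 1 + 2 * t :=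
      ⟨(x - 21 * (4 * n - 1) - 1) / 2, by omega⟩
    · exact hit_double n x 21 (-1) 0 t (by norm_num) 2 2 (fun l => by simp [arr]) ht (by omega) (by omega)
    · exact hit_double n x 21 (-1) 1 t (by norm_num) 1 6 (fun l => by simp [arr]) ht (by omega) (by omega)
  by_cases h23 : x ≤ 24 * (4 * n - 1)
  · exact hit_single n x 23 (1) (by norm_num) 1 2 (fun l => by simp [arr]) (by linarith) (by linarith)
  by_cases h24 : x ≤ 25 * (4 * n - 1)
  · exact hit_single n x 24 (1) (by norm_num) 3 1 (fun l => by simp [arr]) (by linarith) (by linarith)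
  by_cases h25 : x ≤ 26 * (4 * n - 1)
  · exact hit_single n x 25 (-1) (by norm_num) 1 0 (fun l => by simp [arr]) (by linarith) (by linarith)
  by_cases h26 : x ≤ 28 * (4 * n - 1)
  · obtain ⟨t, ht | ht⟩ : ∃ t, x = 26 * (4 * n - 1) + 1 + 0 + 2 * t ∨ x = 26 * (4 * n - 1) + 1 + 1 + 2 * t :=
      ⟨(x - 26 * (4 * n - 1) - 1) / 2, by omega⟩
    · exact hit_double n x 26 (1) 0 t (by norm_num) 5 1 (fun l => by simp [arr]) ht (by omega) (by omega)
    · exact hit_double n x 26 (1) 1 t (by norm_num) 4 0 (fun l => by simp [arr]) ht (by omega) (by omega)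
  by_cases h28 : x ≤ 29 * (4 * n - 1)
  · exact hit_single n x 28 (-1) (by norm_num) 0 2 (fun l => by simp [arr]) (by linarith) (by linarith)
  by_cases h29 : x ≤ 30 * (4 * n - 1)
  · exact hit_single n x 29 (1) (by norm_num) 2 4 (fun l => by simp [arr]) (by linarith) (by linarith)
  by_cases h30 : x ≤ 31 * (4 * n - 1)
  · exact hit_single n x 30 (1) (by norm_num) 5 2 (fun l => by simp [arr]) (by linarith) (by linarith)
  by_cases h31 : x ≤ 32 * (4 * n - 1)
  · exact hit_single n x 31 (-1) (by norm_num) 3 2 (fun l => by simp [arr]) (by linarith) (by linarith)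
  exact absurd hx (by linarith)

theorem hit_high (n x : ℤ) (h0 : 32 * (4 * n - 1) < x) (hx : x ≤ 49 * (4 * n - 1)) : Hit n x := by
  by_cases h1 : x ≤ 34 * (4 * n - 1) + 1
  · obtain ⟨t, ht | ht⟩ : ∃ t, x = 32 * (4 * n - 1) + 1 + 2 * t ∨ x = 32 * (4 * n - 1) + 1 + 1 + 2 * t :=
      ⟨(x - 32 * (4 * n - 1) - 1) / 2, by omega⟩
    · obtain ⟨l, r, hl, hr0, hr⟩ : ∃ l r : ℤ, t = 4 * l + r ∧ 0 ≤ r ∧ r < 4 :=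
        ⟨t / 4, t % 4, by omega, by omega, by omega⟩
      have hln : l < n := by omega
      have key : quad n l (2 * r) = x := by rw [ht, hl, quad]; ring
      refine ⟨l, by omega, by omega, ?_⟩
      interval_cases r
      · exact ⟨3, 3, by rw [← key]; simp [arr, hln]⟩
      · exact ⟨3, 4, by rw [← key]; simp [arr, hln]⟩
      · exact ⟨4, 3, by rw [← key]; simp [arr, hln]⟩
      · exact ⟨4, 4, by rw [← key]; simp [arr, hln]⟩
    · exact hit_double n x 32 (1) 1 t (by norm_num) 0 3 (fun l => by simp [arr]) ht (by omega) (by omega)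
  by_cases h2 : x ≤ 34 * (4 * n - 1) + 1 + 12 * n
  · obtain ⟨l, r, hl, hr0, hr⟩ : ∃ l r : ℤ, x = 34 * (4 * n - 1) + 1 + 12 * l + r ∧ 1 ≤ r ∧ r < 13 :=
      ⟨(x - 34 * (4 * n - 1) - 2) / 12, (x - 34 * (4 * n - 1) - 2) % 12 + 1, by omega, by omega, by omega⟩
    have hln : l < n := by omega
    have key : runA n l r = x := by rw [hl, runA]
    refine ⟨l, by omega, by omega, ?_⟩
    interval_cases r
    · exact ⟨3, 5, by rw [← key]; simp [arr, hln]⟩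
    · exact ⟨4, 5, by rw [← key]; simp [arr, hln]⟩
    · exact ⟨3, 6, by rw [← key]; simp [arr, hln]⟩
    · exact ⟨4, 6, by rw [← key]; simp [arr, hln]⟩
    · exact ⟨5, 3, by rw [← key]; simp [arr, hln]⟩
    · exact ⟨5, 5, by rw [← key]; simp [arr, hln]⟩
    · exact ⟨6, 5, by rw [← key]; simp [arr, hln]⟩
    · exact ⟨6, 4, by rw [← key]; simp [arr, hln]⟩
    · exact ⟨6, 3, by rw [← key]; simp [arr, hln]⟩
    · exact ⟨6, 6, by rw [← key]; simp [arr, hln]⟩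
    · exact ⟨5, 6, by rw [← key]; simp [arr, hln]⟩
    · exact ⟨5, 4, by rw [← key]; simp [arr, hln]⟩
  · obtain ⟨l, r, hl, hr0, hr⟩ : ∃ l r : ℤ, x = 34 * (4 * n - 1) + 1 + 12 * n + 16 * (l - n) + r ∧ 1 ≤ r ∧ r < 17 :=
      ⟨(x - 34 * (4 * n - 1) - 12 * n - 2) / 16 + n, (x - 34 * (4 * n - 1) - 12 * n - 2) % 16 + 1, by omega, by omega, by omega⟩
    have hln : ¬ l < n := by omega
    have key : runB n l r = x := by rw [hl, runB]
    refine ⟨l, by omega, by omega, ?_⟩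
    interval_cases r
    · exact ⟨3, 3, by rw [← key]; simp [arr, hln]⟩
    · exact ⟨3, 4, by rw [← key]; simp [arr, hln]⟩
    · exact ⟨4, 3, by rw [← key]; simp [arr, hln]⟩
    · exact ⟨4, 4, by rw [← key]; simp [arr, hln]⟩
    · exact ⟨3, 5, by rw [← key]; simp [arr, hln]⟩
    · exact ⟨3, 6, by rw [← key]; simp [arr, hln]⟩
    · exact ⟨4, 5, by rw [← key]; simp [arr, hln]⟩
    · exact ⟨4, 6, by rw [← key]; simp [arr, hln]⟩
    · exact ⟨5, 3, by rw [← key]; simp [arr, hln]⟩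
    · exact ⟨5, 4, by rw [← key]; simp [arr, hln]⟩
    · exact ⟨6, 3, by rw [← key]; simp [arr, hln]⟩
    · exact ⟨6, 4, by rw [← key]; simp [arr, hln]⟩
    · exact ⟨5, 5, by rw [← key]; simp [arr, hln]⟩
    · exact ⟨5, 6, by rw [← key]; simp [arr, hln]⟩
    · exact ⟨6, 5, by rw [← key]; simp [arr, hln]⟩
    · exact ⟨6, 6, by rw [← key]; simp [arr, hln]⟩

theorem exists_IHS_seven_seven
    (c : ℕ) (hc : 0 < c) (hcmod : c % 4 = 3) :
    ∃ A : Fin c → Matrix (Fin 7) (Fin 7) ℤ, IsIHS 7 7 c A := by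
  obtain ⟨n, hn⟩ : ∃ n : ℤ, (c : ℤ) = 4 * n - 1 := ⟨(c + 1) / 4, by omega⟩
  let A : Fin c → Matrix (Fin 7) (Fin 7) ℤ := fun l => arr n ((l : ℕ) : ℤ)
  let f : Fin c × Fin 7 × Fin 7 → ℤ := fun p => |A p.1 p.2.1 p.2.2|
  have hsurj : ∀ x : ℤ, 1 ≤ x → x ≤ 49 * (c : ℤ) → ∃ p, f p = x := by
    intro x h1 h2
    rw [hn] at h2
    have hit : Hit n x := by
      by_cases h : x ≤ 32 * (4 * n - 1)
      · exact hit_low n x (by omega) h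
      · exact hit_high n x (by omega) h2
    obtain ⟨l, hl0, hl, i, j, hij⟩ := hit
    refine ⟨(⟨l.toNat, by omega⟩, i, j), ?_⟩
    have hcast : ((l.toNat : ℕ) : ℤ) = l := Int.toNat_of_nonneg hl0
    simp only [f, A, hcast]
    rcases hij with h | h
    · rw [h, abs_of_nonneg (by omega)]
    · rw [h, abs_neg, abs_of_nonneg (by omega)]
  have hsub : Finset.Icc (1 : ℤ) (49 * c) ⊆ Finset.univ.image f := by
    intro x hx
    rw [Finset.mem_Icc] at hx
    obtain ⟨p, hp⟩ := hsurj x hx.1 hx.2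
    exact Finset.mem_image.2 ⟨p, Finset.mem_univ _, hp⟩
  have hcard : (Finset.univ : Finset (Fin c × Fin 7 × Fin 7)).card = 49 * c := by
    simp [Fintype.card_prod]; ring
  have hIcc : (Finset.Icc (1 : ℤ) (49 * c)).card = 49 * c := by
    rw [Int.card_Icc]; omega
  have hle : (Finset.univ.image f).card ≤ (Finset.Icc (1 : ℤ) (49 * c)).card := by
    rw [hIcc, ← hcard]; exact Finset.card_image_le
  have heq := Finset.eq_of_subset_of_card_le hsub hle
  have hinj : Function.Injective f := by
    have : (Finset.univ.image f).card = (Finset.univ : Finset (Fin c × Fin 7 × Fin 7)).card := by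
      rw [← heq, hIcc, hcard]
    have h2 := Finset.card_image_iff.1 this
    rwa [Finset.coe_univ, Set.injOn_univ] at h2
  refine ⟨A, hinj, ?_, fun l i => arr_row _ _ i, fun l j => arr_col _ _ j⟩
  intro x
  constructor
  · rintro ⟨h1, h2⟩
    obtain ⟨p, hp⟩ := hsurj x h1 (by push_cast at h2; linarith)
    exact ⟨p.1, p.2.1, p.2.2, hp⟩
  · rintro ⟨l, i, j, h⟩
    have hm : x ∈ Finset.univ.image f := Finset.mem_image.2 ⟨(l, i, j), Finset.mem_univ _, h⟩
    rw [← heq, Finset.mem_Icc] at hm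
    refine ⟨hm.1, ?_⟩
    push_cast
    linarith [hm.2]
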